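/- For all real numbers c and d, the polynomial maps F(x,y) = (x, xy + y⁷ + cy⁸ + dy⁹) and G(x,y) = (x, xy + y⁷ + (d − (7/12)c²)y⁹) have A⁹-equivalent 9-jets at the origin: j⁹F(0) ∼_{A⁹} j⁹G(0). -/

import Mathlib

open Filter Topology

noncomputable section

/-- Directional derivative of a scalar function. -/
def dop (v : ℝ × ℝ) (g : ℝ × ℝ → ℝ) : ℝ × ℝ → ℝ :=
  fun p => fderiv ℝ g p v

/-- Partial derivative operator in the first coordinate. -/
def pdx : (ℝ × ℝ → ℝ) → ℝ × ℝ → ℝ := dop (1, 0)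

/-- Partial derivative operator in the second coordinate. -/
def pdy : (ℝ × ℝ → ℝ) → ℝ × ℝ → ℝ := dop (0, 1)

/-- Taylor coefficient `a_{ij} = ∂_x^i ∂_y^j g(0,0) / (i! j!)` of `g` at the origin. -/
def tcoeff (g : ℝ × ℝ → ℝ) (i j : ℕ) : ℝ :=
  (pdx^[i] (pdy^[j] g)) 0 / (Nat.factorial i * Nat.factorial j)

/-- The Jacobian determinant `λ_f` of a map `f : ℝ² → ℝ²`. -/
def jacDet (f : ℝ × ℝ → ℝ × ℝ) (p : ℝ × ℝ) : ℝ :=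
  (fderiv ℝ f p (1, 0)).1 * (fderiv ℝ f p (0, 1)).2 -
    (fderiv ℝ f p (1, 0)).2 * (fderiv ℝ f p (0, 1)).1

/-- `f` has corank one at `0` : the derivative of `f` at `0` has rank one. -/
def CorankOne (f : ℝ × ℝ → ℝ × ℝ) : Prop :=
  LinearMap.rank ((fderiv ℝ f 0).toLinearMap) = 1

/-- `η` is a null vector field for `f` near `0`. -/
def IsNullVF (f η : ℝ × ℝ → ℝ × ℝ) : Prop :=
  η 0 ≠ 0 ∧ ∃ U ∈ 𝓝 (0 : ℝ × ℝ),
    ContDiffOn ℝ (⊤ : ℕ∞) η U ∧ ∀ p ∈ U, jacDet f p = 0 → fderiv ℝ f p (η p) = 0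

/-- The derivative `(ηg)(p) = Dg(p)(η(p))` of `g` along the vector field `η`. -/
def etaD (η : ℝ × ℝ → ℝ × ℝ) (g : ℝ × ℝ → ℝ) : ℝ × ℝ → ℝ :=
  fun p => fderiv ℝ g p (η p)

/-- The iterated derivative `η^k g` along the vector field `η`. -/
def etaIter (η : ℝ × ℝ → ℝ × ℝ) : ℕ → (ℝ × ℝ → ℝ) → ℝ × ℝ → ℝ
  | 0, g => g
  | k + 1, g => etaD η (etaIter η k g)

/-- The Hessian matrix of second partial derivatives of `g` at `0`. -/
def hess (g : ℝ × ℝ → ℝ) : Matrix (Fin 2) (Fin 2) ℝ :=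
  !![pdx (pdx g) 0, pdx (pdy g) 0; pdy (pdx g) 0, pdy (pdy g) 0]

/-- `A^r`-equivalence of the `r`-jets at `0` of two map-germs `(ℝ²,0) → (ℝ²,0)`. -/
def JetEquiv (r : ℕ) (f g : ℝ × ℝ → ℝ × ℝ) : Prop :=
  ∃ φ ψ : ℝ × ℝ → ℝ × ℝ,
    ContDiff ℝ (⊤ : ℕ∞) φ ∧ ContDiff ℝ (⊤ : ℕ∞) ψ ∧ φ 0 = 0 ∧ ψ 0 = 0 ∧
    Function.Bijective (⇑(fderiv ℝ φ 0)) ∧ Function.Bijective (⇑(fderiv ℝ ψ 0)) ∧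
    ∀ i ≤ r, iteratedFDeriv ℝ i (ψ ∘ f ∘ φ) 0 = iteratedFDeriv ℝ i g 0

/-- `A`-equivalence of two map-germs `(ℝ²,0) → (ℝ²,0)`. -/
def AEquiv (f g : ℝ × ℝ → ℝ × ℝ) : Prop :=
  ∃ φ ψ : ℝ × ℝ → ℝ × ℝ,
    ContDiff ℝ (⊤ : ℕ∞) φ ∧ ContDiff ℝ (⊤ : ℕ∞) ψ ∧ φ 0 = 0 ∧ ψ 0 = 0 ∧
    Function.Bijective (⇑(fderiv ℝ φ 0)) ∧ Function.Bijective (⇑(fderiv ℝ ψ 0)) ∧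
    ∀ᶠ p in 𝓝 (0 : ℝ × ℝ), ψ (f (φ p)) = g p

/-- `f` has the form `(x, g(x,y))` where `g` is `C^∞` and the Taylor coefficients of `g`
of total degree `< N` at the origin are prescribed by `P`. -/
def HasForm (f : ℝ × ℝ → ℝ × ℝ) (g : ℝ × ℝ → ℝ) (N : ℕ) (P : ℕ → ℕ → ℝ) : Prop :=
  ContDiff ℝ (⊤ : ℕ∞) g ∧ (∀ p, f p = (p.1, g p)) ∧
    ∀ i j, i + j < N → tcoeff g i j = P i j

open scoped ContDiff

/-!
Write `s = y / (1 + e y)`. The substitution `(x, y) ↦ ((1 + e y) (x + e h(s)), s)` in the source,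
followed by the shear `(X, Y) ↦ (X - e Y, Y)` in the target, turns `(x, x y + h(y))` into
`(x, x y + (1 + e y) h(s))` exactly, because `(1 + e y) s = y`. For
`h(y) = y ^ n + c y ^ (n + 1) + d y ^ (n + 2)` the new function is
`y ^ n + (c - (n - 1) e) y ^ (n + 1) + ⋯`, so `e = c / (n - 1)` removes the term of degree `n + 1`,
and the coefficient of degree `n + 2` becomes `d - n c ^ 2 / (2 (n - 1))`. Since `s` is only
defined near the origin, it is replaced by a smooth function on the whole line with the same germ.
-/

theorem exists_contDiff_eventuallyEq {E F : Type*} [NormedAddCommGroup E] [NormedSpace ℝ E]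
    [HasContDiffBump E] [NormedAddCommGroup F] [NormedSpace ℝ F] {f : E → F} {x : E} {n : ℕ∞}
    (hf : ∀ᶠ y in 𝓝 x, ContDiffAt ℝ n f y) : ∃ g : E → F, ContDiff ℝ n g ∧ g =ᶠ[𝓝 x] f := by
  obtain ⟨ε, hε, hball⟩ := Metric.nhds_basis_closedBall.mem_iff.mp hf
  let χ : ContDiffBump x := ⟨ε / 2, ε, half_pos hε, half_lt_self hε⟩
  refine ⟨fun y => χ y • f y, ?_, ?_⟩
  · refine contMDiff_iff_contDiff.mp (contMDiff_of_tsupport fun y hy => ?_)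
    have hy' : y ∈ Metric.closedBall x ε := χ.tsupport_eq ▸ tsupport_smul_subset_left _ _ hy
    exact (χ.contDiffAt.smul (hball hy')).contMDiffAt
  · filter_upwards [χ.eventuallyEq_one] with y hy
    simp [hy]

section IteratedDeriv

variable {𝕜 : Type*} [NontriviallyNormedField 𝕜]

theorem iteratedDeriv_comp_mul_left {F : Type*} [NormedAddCommGroup F] [NormedSpace 𝕜 F]
    (n : ℕ) (c : 𝕜) (f : 𝕜 → F) :
    iteratedDeriv n (fun x => f (c * x)) = fun x => c ^ n • iteratedDeriv n f (c * x) := by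
  induction n with
  | zero => simp
  | succ n ih =>
    funext x
    rw [iteratedDeriv_succ, ih, deriv_fun_const_smul_field, iteratedDeriv_succ,
      deriv_comp_mul_left c (iteratedDeriv n f), smul_smul, pow_succ]

theorem iteratedDeriv_one_add_mul_zpow_zero (n : ℕ) (c : 𝕜) (m : ℤ) :
    iteratedDeriv n (fun x => (1 + c * x) ^ m) 0 = c ^ n * ∏ i ∈ Finset.range n, ((m : 𝕜) - i) := by
  rw [iteratedDeriv_comp_mul_left n c (fun x => (1 + x) ^ m),
    iteratedDeriv_comp_const_add n (fun x : 𝕜 => x ^ m), iteratedDeriv_eq_iterate, iter_deriv_zpow']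
  simp

theorem iteratedDeriv_pow_mul_zero {n : ℕ} (m : ℕ) {f : 𝕜 → 𝕜} (hf : ContDiffAt 𝕜 n f 0) :
    iteratedDeriv n (fun x => x ^ m * f x) 0 =
      n.descFactorial m * iteratedDeriv (n - m) f 0 := by
  rw [iteratedDeriv_fun_mul (by fun_prop) hf]
  simp only [iteratedDeriv_fun_pow_zero]
  by_cases hmn : m ≤ n
  · simp [Nat.lt_succ_of_le hmn, Nat.descFactorial_eq_factorial_mul_choose, mul_comm]
  · have hnm : n.descFactorial m = 0 := Nat.descFactorial_eq_zero_iff_lt.mpr (not_le.mp hmn)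
    simp [hnm, hmn]

theorem iteratedDeriv_pow_mul_zero_congr {m n : ℕ} {f g : 𝕜 → 𝕜} (hf : ContDiffAt 𝕜 (m + n) f 0)
    (hg : ContDiffAt 𝕜 (m + n) g 0)
    (hfg : ∀ i ≤ n, iteratedDeriv i f 0 = iteratedDeriv i g 0) {i : ℕ} (hi : i ≤ m + n) :
    iteratedDeriv i (fun x => x ^ m * f x) 0 = iteratedDeriv i (fun x => x ^ m * g x) 0 := by
  have hi' : (i : WithTop ℕ∞) ≤ m + n := mod_cast hi
  rw [iteratedDeriv_pow_mul_zero m (hf.of_le hi'), iteratedDeriv_pow_mul_zero m (hg.of_le hi'),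
    hfg (i - m) (by lia)]

end IteratedDeriv

theorem contDiffAt_one_add_mul_zpow (e : ℝ) (m : ℤ) {n : WithTop ℕ∞} :
    ContDiffAt ℝ n (fun y => (1 + e * y) ^ m) 0 :=
  (AnalyticAt.zpow (by fun_prop) (by simp)).contDiffAt

/-- The shear `(x, y) ↦ (x + t y, y)` of the plane. -/
def shear (t : ℝ) : ℝ × ℝ →L[ℝ] ℝ × ℝ :=
  (ContinuousLinearMap.fst ℝ ℝ ℝ + t • ContinuousLinearMap.snd ℝ ℝ ℝ).prod
    (ContinuousLinearMap.snd ℝ ℝ ℝ)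

theorem shear_apply (t : ℝ) (p : ℝ × ℝ) : shear t p = (p.1 + t * p.2, p.2) := rfl

theorem shear_bijective (t : ℝ) : Function.Bijective (shear t) :=
  Function.bijective_iff_has_inverse.mpr
    ⟨shear (-t), fun p => by simp [shear_apply], fun p => by simp [shear_apply]⟩

theorem AEquiv.jetEquiv {f g : ℝ × ℝ → ℝ × ℝ} (hfg : AEquiv f g) (r : ℕ) : JetEquiv r f g := by
  obtain ⟨φ, ψ, hφ, hψ, hφ0, hψ0, hφ', hψ', heq⟩ := hfg
  exact ⟨φ, ψ, hφ, hψ, hφ0, hψ0, hφ', hψ', fun i _ =>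
    (EventuallyEq.iteratedFDeriv ℝ heq i).eq_of_nhds⟩

theorem JetEquiv.congr_right {r : ℕ} {f g g' : ℝ × ℝ → ℝ × ℝ} (hfg : JetEquiv r f g)
    (hg : ∀ i ≤ r, iteratedFDeriv ℝ i g 0 = iteratedFDeriv ℝ i g' 0) : JetEquiv r f g' := by
  obtain ⟨φ, ψ, hφ, hψ, hφ0, hψ0, hφ', hψ', heq⟩ := hfg
  exact ⟨φ, ψ, hφ, hψ, hφ0, hψ0, hφ', hψ', fun i hi => (heq i hi).trans (hg i hi)⟩

/-- The unfolding `(x, y) ↦ (x, x y + h y)` of a function germ `h` of one variable. -/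
def unfolding (h : ℝ → ℝ) (p : ℝ × ℝ) : ℝ × ℝ := (p.1, p.1 * p.2 + h p.2)

theorem iteratedFDeriv_unfolding_congr {r : ℕ} {h k : ℝ → ℝ} (hh : ContDiff ℝ r h)
    (hk : ContDiff ℝ r k) (hhk : ∀ i ≤ r, iteratedDeriv i h 0 = iteratedDeriv i k 0)
    {i : ℕ} (hi : i ≤ r) :
    iteratedFDeriv ℝ i (unfolding h) 0 = iteratedFDeriv ℝ i (unfolding k) 0 := by
  let ι := ContinuousLinearMap.inr ℝ ℝ ℝ
  let π := ContinuousLinearMap.snd ℝ ℝ ℝ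
  have hir : (i : WithTop ℕ∞) ≤ r := mod_cast hi
  have split {f : ℝ → ℝ} (hf : ContDiff ℝ r f) : iteratedFDeriv ℝ i (unfolding f) 0 =
      iteratedFDeriv ℝ i (fun p : ℝ × ℝ => (p.1, p.1 * p.2)) 0 +
        ι.compContinuousMultilinearMap
          ((iteratedFDeriv ℝ i f 0).compContinuousLinearMap fun _ => π) := by
    have hsum : unfolding f = (fun p => (p.1, p.1 * p.2)) + ι ∘ f ∘ π := by
      funext p
      simp [unfolding, ι, π]
    have hfπ : ContDiff ℝ r (f ∘ π) := hf.comp π.contDiff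
    rw [hsum, iteratedFDeriv_add_apply (by fun_prop)
        ((ι.contDiff.comp hfπ).of_le hir).contDiffAt,
      ι.iteratedFDeriv_comp_left hfπ.contDiffAt hir, π.iteratedFDeriv_comp_right hf 0 hir, map_zero]
  have hhki : iteratedFDeriv ℝ i h 0 = iteratedFDeriv ℝ i k 0 := by
    simp only [iteratedFDeriv_eq_equiv_comp, Function.comp_apply, hhk i hi]
  rw [split hh, split hk, hhki]

theorem eventually_one_add_mul_ne_zero (e : ℝ) : ∀ᶠ y in 𝓝 (0 : ℝ), 1 + e * y ≠ 0 :=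
  ContinuousAt.eventually_ne (by fun_prop) (by simp)

theorem exists_contDiff_eventuallyEq_div_one_add_mul (e : ℝ) :
    ∃ s : ℝ → ℝ, ContDiff ℝ ∞ s ∧ s =ᶠ[𝓝 0] fun y => y / (1 + e * y) := by
  refine exists_contDiff_eventuallyEq ?_
  filter_upwards [eventually_one_add_mul_ne_zero e] with y hy
  fun_prop (disch := exact hy)

theorem hasDerivAt_div_one_add_mul_zero (e : ℝ) :
    HasDerivAt (fun y => y / (1 + e * y)) 1 0 := by
  simpa using (hasDerivAt_id (0 : ℝ)).fun_div
    (((hasDerivAt_id (0 : ℝ)).const_mul e).const_add 1) (by simp)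

/-- The source coordinate change carrying `unfolding h`, up to a shear of the target, to
`unfolding fun y => (1 + e * y) * h (s y)`. The function `s` is meant to be a smooth function on
the whole line whose germ at the origin is that of `y / (1 + e * y)`. -/
def projectiveChange (e : ℝ) (h s : ℝ → ℝ) (p : ℝ × ℝ) : ℝ × ℝ :=
  ((1 + e * p.2) * (p.1 + e * h (s p.2)), s p.2)

theorem hasFDerivAt_projectiveChange (e : ℝ) {h s : ℝ → ℝ} (hh : DifferentiableAt ℝ h 0)
    (h0 : h 0 = 0) (hs : HasDerivAt s 1 0) (s0 : s 0 = 0) :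
    HasFDerivAt (projectiveChange e h s) (shear (e * deriv h 0)) 0 := by
  have hfst : HasFDerivAt Prod.fst (ContinuousLinearMap.fst ℝ ℝ ℝ) (0 : ℝ × ℝ) := hasFDerivAt_fst
  have hsnd : HasFDerivAt Prod.snd (ContinuousLinearMap.snd ℝ ℝ ℝ) (0 : ℝ × ℝ) := hasFDerivAt_snd
  have hhs : HasDerivAt (h ∘ s) (deriv h 0 * 1) 0 :=
    HasDerivAt.comp 0 (s0.symm ▸ hh.hasDerivAt) hs
  have hx := ((hsnd.const_mul e).const_add 1).fun_mul
    (hfst.fun_add ((hhs.comp_hasFDerivAt (0 : ℝ × ℝ) hsnd).const_mul e))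
  have hy := hs.comp_hasFDerivAt (0 : ℝ × ℝ) hsnd
  refine (hx.prodMk hy).congr_fderiv ?_
  ext <;> simp [shear_apply, s0, h0]

theorem shear_unfolding_projectiveChange (e : ℝ) (h : ℝ → ℝ) {s : ℝ → ℝ} {p : ℝ × ℝ}
    (hsp : (1 + e * p.2) * s p.2 = p.2) :
    shear (-e) (unfolding h (projectiveChange e h s p)) =
      unfolding (fun y => (1 + e * y) * h (s y)) p := by
  ext
  · simp only [shear_apply, unfolding, projectiveChange]
    linear_combination (-e) * (p.1 + e * h (s p.2)) * hsp
  · simp only [shear_apply, unfolding, projectiveChange]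
    linear_combination (p.1 + e * h (s p.2)) * hsp

theorem aEquiv_unfolding_of_eventuallyEq_div {e : ℝ} {h s : ℝ → ℝ} (hh : ContDiff ℝ ∞ h)
    (h0 : h 0 = 0) (hs : ContDiff ℝ ∞ s) (hs' : s =ᶠ[𝓝 0] fun y => y / (1 + e * y)) :
    AEquiv (unfolding h) (unfolding fun y => (1 + e * y) * h (s y)) := by
  have s0 : s 0 = 0 := by simpa using hs'.eq_of_nhds
  have hφ := hasFDerivAt_projectiveChange e (hh.differentiable (by simp) 0) h0
    ((hasDerivAt_div_one_add_mul_zero e).congr_of_eventuallyEq hs') s0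
  refine ⟨projectiveChange e h s, shear (-e), ?_, (shear (-e)).contDiff, ?_, map_zero _, ?_, ?_, ?_⟩
  · unfold projectiveChange
    fun_prop
  · simp [projectiveChange, s0, h0]
  · rw [hφ.fderiv]
    exact shear_bijective _
  · rw [(shear (-e)).fderiv]
    exact shear_bijective _
  · have hsnd : Tendsto Prod.snd (𝓝 (0 : ℝ × ℝ)) (𝓝 0) := continuous_snd.tendsto 0
    filter_upwards [hsnd.eventually hs', hsnd.eventually (eventually_one_add_mul_ne_zero e)]
      with p hsp hp
    exact shear_unfolding_projectiveChange e h (by rw [hsp, mul_div_cancel₀ _ hp])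

/-- The factor `u` in `(1 + e y) h (y / (1 + e y)) = y ^ n u y`, for
`h y = y ^ n + (n - 1) e y ^ (n + 1) + d y ^ (n + 2)`. Stated with integer powers of `1 + e y`, it
is smooth at the origin and easy to differentiate there. -/
def projectiveFactor (n : ℕ) (e d y : ℝ) : ℝ :=
  (1 + e * y) ^ (1 - n : ℤ) + (n - 1) * e * (y ^ 1 * (1 + e * y) ^ (-n : ℤ)) +
    d * (y ^ 2 * (1 + e * y) ^ (-n - 1 : ℤ))

theorem contDiffAt_projectiveFactor (n : ℕ) (e d : ℝ) {r : WithTop ℕ∞} :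
    ContDiffAt ℝ r (projectiveFactor n e d) 0 := by
  have hz (k : ℤ) : ContDiffAt ℝ r (fun y => (1 + e * y) ^ k) 0 := contDiffAt_one_add_mul_zpow e k
  unfold projectiveFactor
  fun_prop

theorem pow_mul_projectiveFactor (n : ℕ) (e d : ℝ) {y : ℝ} (hy : 1 + e * y ≠ 0) :
    y ^ n * projectiveFactor n e d y = (1 + e * y) * ((y / (1 + e * y)) ^ n +
      (n - 1) * e * (y / (1 + e * y)) ^ (n + 1) + d * (y / (1 + e * y)) ^ (n + 2)) := by
  simp only [projectiveFactor, zpow_sub₀ hy, zpow_neg, zpow_natCast, zpow_one, div_pow, pow_succ]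
  field_simp

theorem iteratedDeriv_projectiveFactor_zero (n : ℕ) (e d : ℝ) {j : ℕ} (hj : j ≤ 2) :
    iteratedDeriv j (projectiveFactor n e d) 0 =
      iteratedDeriv j (fun y => 1 + (d - n * (n - 1) / 2 * e ^ 2) * y ^ 2) 0 := by
  have hz (k : ℤ) : ContDiffAt ℝ j (fun y => (1 + e * y) ^ k) 0 := contDiffAt_one_add_mul_zpow e k
  unfold projectiveFactor
  rw [iteratedDeriv_fun_add (by fun_prop) (by fun_prop),
    iteratedDeriv_fun_add (by fun_prop) (by fun_prop),
    iteratedDeriv_fun_add (by fun_prop) (by fun_prop)]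
  simp only [iteratedDeriv_const_mul_field, iteratedDeriv_pow_mul_zero, hz,
    iteratedDeriv_one_add_mul_zpow_zero, iteratedDeriv_fun_pow_zero, iteratedDeriv_const]
  interval_cases j <;> simp [Finset.prod_range_succ, Nat.descFactorial] <;> ring

theorem iteratedDeriv_projective_pullback_zero (n : ℕ) (e d : ℝ) {s : ℝ → ℝ}
    (hs : s =ᶠ[𝓝 0] fun y => y / (1 + e * y)) {i : ℕ} (hi : i ≤ n + 2) :
    iteratedDeriv i (fun y => (1 + e * y) *
        (s y ^ n + (n - 1) * e * s y ^ (n + 1) + d * s y ^ (n + 2))) 0 =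
      iteratedDeriv i (fun y => y ^ n + (d - n * (n - 1) / 2 * e ^ 2) * y ^ (n + 2)) 0 := by
  have hleft : (fun y => (1 + e * y) * (s y ^ n + (n - 1) * e * s y ^ (n + 1) + d * s y ^ (n + 2)))
      =ᶠ[𝓝 0] fun y => y ^ n * projectiveFactor n e d y := by
    filter_upwards [hs, eventually_one_add_mul_ne_zero e] with y hsy hy
    rw [hsy, pow_mul_projectiveFactor n e d hy]
  have hright : (fun y => y ^ n + (d - n * (n - 1) / 2 * e ^ 2) * y ^ (n + 2)) =
      fun y => y ^ n * (1 + (d - n * (n - 1) / 2 * e ^ 2) * y ^ 2) := by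
    funext y
    ring
  rw [hleft.iteratedDeriv_eq i, hright]
  exact iteratedDeriv_pow_mul_zero_congr (n := 2) (contDiffAt_projectiveFactor n e d) (by fun_prop)
    (fun j hj => iteratedDeriv_projectiveFactor_zero n e d hj) hi

theorem jetEquiv_unfolding {n : ℕ} (hn : n ≠ 0) (e d : ℝ) :
    JetEquiv (n + 2)
      (unfolding fun y => y ^ n + (n - 1) * e * y ^ (n + 1) + d * y ^ (n + 2))
      (unfolding fun y => y ^ n + (d - n * (n - 1) / 2 * e ^ 2) * y ^ (n + 2)) := by
  obtain ⟨s, hs, hs'⟩ := exists_contDiff_eventuallyEq_div_one_add_mul e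
  have hequiv := aEquiv_unfolding_of_eventuallyEq_div
    (h := fun y => y ^ n + (n - 1) * e * y ^ (n + 1) + d * y ^ (n + 2)) (by fun_prop) (by simp [hn])
    hs hs'
  have hsr : ContDiff ℝ (n + 2 : ℕ) s := contDiff_infty.mp hs _
  exact (hequiv.jetEquiv (n + 2)).congr_right fun i hi => iteratedFDeriv_unfolding_congr
    (by fun_prop) (by fun_prop) (fun j hj => iteratedDeriv_projective_pullback_zero n e d hs' hj) hi

theorem stmt6_general {n : ℕ} (hn : 2 ≤ n) (c d : ℝ) :
    JetEquiv (n + 2)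
      (fun p => (p.1, p.1 * p.2 + p.2 ^ n + c * p.2 ^ (n + 1) + d * p.2 ^ (n + 2)))
      (fun p => (p.1, p.1 * p.2 + p.2 ^ n + (d - n / (2 * (n - 1)) * c ^ 2) * p.2 ^ (n + 2))) := by
  have hn1 : (n : ℝ) - 1 ≠ 0 := sub_ne_zero.mpr (mod_cast (by lia : n ≠ 1))
  obtain ⟨e, rfl⟩ : ∃ e, c = (n - 1) * e := ⟨c / (n - 1), (mul_div_cancel₀ c hn1).symm⟩
  have hcoeff : n / (2 * (n - 1)) * ((n - 1) * e) ^ 2 = n * (n - 1) / 2 * e ^ 2 := by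
    field_simp
  have hunfold := jetEquiv_unfolding (by lia : n ≠ 0) e d
  unfold unfolding at hunfold
  simpa only [hcoeff, add_assoc] using hunfold

theorem stmt6 (c d : ℝ) :
    JetEquiv 9 (fun p => (p.1, p.1 * p.2 + p.2 ^ 7 + c * p.2 ^ 8 + d * p.2 ^ 9))
      (fun p => (p.1, p.1 * p.2 + p.2 ^ 7 + (d - 7 / 12 * c ^ 2) * p.2 ^ 9)) := by
  convert stmt6_general (n := 7) (by norm_num) c d using 7
  norm_num
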